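/- For every real ε with 0 < ε < 1, every d ≥ 1, and every F ∈ ℕ^d, N(F) ≤ (√3)^{(1 − 2ε^d)·‖F‖} + ε^d·‖F‖·φ^{‖F‖}·(φ/5^{1/4})^{(1 − (1−ε)^d)·‖F‖}, where φ = (1+√5)/2 is the golden ratio. -/

import Mathlib

open Finset

/-- A generalized numerical semigroup (GNS) in `ℕ^d`: contains `0`, is closed under
componentwise addition, and has finite complement. -/
def IsGNS {d : ℕ} (S : Set (Fin d → ℕ)) : Prop :=
  (0 : Fin d → ℕ) ∈ S ∧ (∀ a ∈ S, ∀ b ∈ S, a + b ∈ S) ∧ Sᶜ.Finite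

/-- A relaxed monomial order on `ℕ^d`: a (strict) total order `r` such that
`r v w → r v (w + u)` and `0` is below every nonzero element. -/
def IsRMO {d : ℕ} (r : (Fin d → ℕ) → (Fin d → ℕ) → Prop) : Prop :=
  IsStrictTotalOrder (Fin d → ℕ) r ∧
  (∀ v w u : Fin d → ℕ, r v w → r v (w + u)) ∧
  (∀ v : Fin d → ℕ, v ≠ 0 → r 0 v)

/-- `F` is the Frobenius gap of `S` with respect to the order `r`, i.e. the
`r`-maximum of the gap set `ℕ^d \ S`. -/
def IsFrobGapWrt {d : ℕ} (S : Set (Fin d → ℕ))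
    (r : (Fin d → ℕ) → (Fin d → ℕ) → Prop) (F : Fin d → ℕ) : Prop :=
  F ∉ S ∧ ∀ x, x ∉ S → x ≠ F → r x F

/-- `F` is a Frobenius allowable gap of `S`: it is the Frobenius gap with respect to
some relaxed monomial order. -/
def FrobAllowable {d : ℕ} (S : Set (Fin d → ℕ)) (F : Fin d → ℕ) : Prop :=
  ∃ r, IsRMO r ∧ IsFrobGapWrt S r F

/-- `F` is a maximal gap of `S` with respect to the natural (componentwise)
partial order on `ℕ^d`. -/
def MaxGap {d : ℕ} (S : Set (Fin d → ℕ)) (F : Fin d → ℕ) : Prop :=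
  F ∉ S ∧ ∀ x, x ∉ S → F ≤ x → x = F

/-- The set of Frobenius allowable gaps of `S`, i.e. the maximal elements of the gap
set under the natural partial order. -/
def FA {d : ℕ} (S : Set (Fin d → ℕ)) : Set (Fin d → ℕ) := {F | MaxGap S F}

/-- The set of pseudo-Frobenius gaps of `S`. -/
def PF {d : ℕ} (S : Set (Fin d → ℕ)) : Set (Fin d → ℕ) :=
  {P | P ∉ S ∧ ∀ s ∈ S, s ≠ 0 → P + s ∈ S}

/-- `S` is quasi-irreducible: for every gap `x`, either `2x` is Frobenius allowable or
`F - x ∈ S` for some Frobenius allowable gap `F`. -/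
def QuasiIrreducible {d : ℕ} (S : Set (Fin d → ℕ)) : Prop :=
  ∀ x, x ∉ S → (x + x ∈ FA S ∨ ∃ F ∈ FA S, ∃ s ∈ S, x + s = F)

/-- `S` is a Frobenius GNS with Frobenius gap `F`: the gap set has `F` as its unique
maximal element under the natural partial order. -/
def IsFrobeniusGNS {d : ℕ} (S : Set (Fin d → ℕ)) (F : Fin d → ℕ) : Prop :=
  IsGNS S ∧ MaxGap S F ∧ ∀ x, MaxGap S x → x = F

/-- `‖F‖ = ∏ i (F^(i) + 1)`, the number of lattice points in the box `[0, F]`. -/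
def normF {d : ℕ} (F : Fin d → ℕ) : ℕ := ∏ i, (F i + 1)

/-- `N(F)`: the number of Frobenius GNS in `ℕ^d` with Frobenius gap `F`. -/
noncomputable def NF {d : ℕ} (F : Fin d → ℕ) : ℕ :=
  {S : Set (Fin d → ℕ) | IsFrobeniusGNS S F}.ncard


section helper
variable {d : ℕ}

/-- traces of Frobenius GNS on the box -/
structure Adm (F : Fin d → ℕ) (A : Finset (Fin d → ℕ)) : Prop where
  sub : A ⊆ Finset.Iic F
  zero : (0 : Fin d → ℕ) ∈ A
  top : F ∉ A
  add : ∀ x ∈ A, ∀ y ∈ A, x + y ≤ F → x + y ∈ A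

open Classical in
/-- the finite family of traces -/
noncomputable def Fam (F : Fin d → ℕ) : Finset (Finset (Fin d → ℕ)) :=
  (Finset.Iic F).powerset.filter (Adm F)

lemma mem_Fam {F : Fin d → ℕ} {A} : A ∈ Fam F ↔ Adm F A := by
  classical
  simp only [Fam, Finset.mem_filter, Finset.mem_powerset]
  exact ⟨fun h => h.2, fun h => ⟨h.sub, h⟩⟩

lemma gap_le {S : Set (Fin d → ℕ)} {F x : Fin d → ℕ} (h : IsFrobeniusGNS S F) (hx : x ∉ S) :
    x ≤ F := by
  obtain ⟨⟨_, _, hfin⟩, _, hu⟩ := h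
  obtain ⟨m, hxm, hm⟩ := hfin.exists_le_maximal (a := x) hx
  have : MaxGap S m := ⟨hm.1, fun y hy hmy => le_antisymm (hm.2 hy hmy) hmy⟩
  rw [← hu m this]; exact hxm

lemma NF_le_card (F : Fin d → ℕ) : NF F ≤ (Fam F).card := by
  classical
  unfold NF
  rw [← Set.ncard_coe_finset]
  refine Set.ncard_le_ncard_of_injOn (fun S => (Finset.Iic F).filter (· ∈ S)) ?_ ?_ (Finset.finite_toSet _)
  · intro S hS
    have hS' : IsFrobeniusGNS S F := hS
    simp only [Finset.mem_coe, mem_Fam]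
    refine ⟨Finset.filter_subset _ _, ?_, ?_, ?_⟩
    · simp [hS'.1.1]
    · simp [hS'.2.1.1]
    · intro x hx y hy hxy
      simp only [Finset.mem_filter, Finset.mem_Iic] at *
      exact ⟨hxy, hS'.1.2.1 x hx.2 y hy.2⟩
  · intro S hS S' hS' hEq
    have h1 : ∀ x, x ≤ F → (x ∈ S ↔ x ∈ S') := by
      intro x hx
      have := Finset.ext_iff.1 hEq x
      simpa [hx] using this
    ext x
    by_cases hx : x ≤ F
    · exact h1 x hx
    · exact ⟨fun _ => by_contra fun h => hx (gap_le hS' h), fun _ => by_contra fun h => hx (gap_le hS h)⟩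

lemma normF_eq (F : Fin d → ℕ) : (Finset.Iic F).card = normF F := by
  rw [show Finset.Iic F = Finset.Icc 0 F by ext; simp, Pi.card_Icc]
  simp [normF]

lemma block_lemma {α β : Type*} [DecidableEq α] [DecidableEq β] (X : Finset α) (κ : α → β)
    (G : Finset (Finset α)) (hG : ∀ A ∈ G, A ⊆ X) (w : α → ℝ)
    (h : ∀ x ∈ X, ((G.image (fun A => A.filter (fun y => κ y = κ x))).card : ℝ)
      ≤ ∏ y ∈ X with κ y = κ x, w y) :
    (G.card : ℝ) ≤ ∏ x ∈ X, w x := by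
  rw [← Finset.prod_fiberwise_of_maps_to (s := X) (t := X.image κ) (g := κ)
    (fun x hx => Finset.mem_image_of_mem _ hx)]
  have h1 : G.card ≤ ((X.image κ).pi (fun b => G.image (fun A => A.filter (fun y => κ y = b)))).card := by
    refine Finset.card_le_card_of_injOn (fun A b _ => A.filter (fun y => κ y = b)) ?_ ?_
    · intro A hA
      simp only [Finset.mem_coe, Finset.mem_pi]
      intro b hb
      exact Finset.mem_image_of_mem _ hA
    · intro A hA A' hA' hEq
      ext x
      have key : ∀ x ∈ X, x ∈ A ↔ x ∈ A' := by
        intro x hx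
        have := congrFun (congrFun hEq (κ x)) (Finset.mem_image_of_mem _ hx)
        have := Finset.ext_iff.1 this x
        simpa using this
      exact ⟨fun hx => (key x (hG A hA hx)).1 hx, fun hx => (key x (hG A' hA' hx)).2 hx⟩
  rw [Finset.card_pi] at h1
  calc (G.card : ℝ) ≤ ((∏ b ∈ X.image κ, (G.image (fun A => A.filter (fun y => κ y = b))).card : ℕ) : ℝ) := by
        exact_mod_cast h1
    _ = ∏ b ∈ X.image κ, ((G.image (fun A => A.filter (fun y => κ y = b))).card : ℝ) := by push_cast; rfl
    _ ≤ _ := by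
        apply Finset.prod_le_prod
        · intros; positivity
        · intro b hb
          obtain ⟨x, hx, rfl⟩ := Finset.mem_image.1 hb
          exact h x hx

/-- pair bound -/
lemma pair_lemma (F : Fin d → ℕ) (G : Finset (Finset (Fin d → ℕ))) (hG : ∀ A ∈ G, Adm F A)
    (D : Finset (Fin d → ℕ)) (hD : ∀ A ∈ G, ∀ x ∈ A, x ∈ D → x = 0)
    (w : (Fin d → ℕ) → ℝ)
    (h0 : 1 ≤ w 0 * w F)
    (h1 : ∀ x ≤ F, F - x = x → 1 ≤ w x)
    (h2 : ∀ x ≤ F, x ≠ 0 → x ≠ F → ((if x ∈ D then 0 else 1) + (if F - x ∈ D then 0 else 1) + 1 : ℝ) ≤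
      w x * w (F - x)) :
    (G.card : ℝ) ≤ ∏ x ∈ Finset.Iic F, w x := by
  classical
  refine block_lemma (Finset.Iic F) (fun x => ({x, F - x} : Finset (Fin d → ℕ))) G (fun A hA => (hG A hA).sub) w ?_
  intro x hx
  have hxF : x ≤ F := by simpa using hx
  have hinv : ∀ y ≤ F, F - (F - y) = y := fun y hy => by
    ext i; simp only [Pi.sub_apply]; have : y i ≤ F i := hy i; omega
  have hfib : (Finset.Iic F).filter (fun y => ({y, F - y} : Finset (Fin d → ℕ)) = {x, F - x}) = {x, F - x} := by
    ext y
    simp only [Finset.mem_filter, Finset.mem_Iic, Finset.mem_insert, Finset.mem_singleton]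
    constructor
    · rintro ⟨_, h⟩
      have : y ∈ ({y, F - y} : Finset (Fin d → ℕ)) := by simp
      rw [h] at this; simpa using this
    · rintro (rfl | rfl)
      · exact ⟨hxF, rfl⟩
      · refine ⟨tsub_le_self, ?_⟩
        rw [hinv x hxF, Finset.pair_comm]
  have hdisj : ∀ A ∈ G, ∀ y ∈ A, F - y ∉ A := by
    intro A hA y hy hy'
    have hyF : y ≤ F := by simpa using (hG A hA).sub hy
    have : y + (F - y) = F := by
      ext i; simp only [Pi.sub_apply, Pi.add_apply]; have : y i ≤ F i := hyF i; omega
    have h3 := (hG A hA).add y hy _ hy' this.le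
    rw [this] at h3
    exact (hG A hA).top h3
  rw [hfib]
  have htr : ∀ A ∈ G, A.filter (fun y => ({y, F - y} : Finset (Fin d → ℕ)) = {x, F - x}) =
      (({x, F - x} : Finset (Fin d → ℕ)).filter (· ∈ A)) := by
    intro A hA
    ext y
    have := Finset.ext_iff.1 hfib y
    simp only [Finset.mem_filter, Finset.mem_Iic] at this ⊢
    rw [← this]
    constructor
    · rintro ⟨a, b⟩; exact ⟨⟨by simpa using (hG A hA).sub a, b⟩, a⟩
    · rintro ⟨⟨_, b⟩, a⟩; exact ⟨a, b⟩
  rw [Finset.image_congr (g := fun A => (({x, F - x} : Finset (Fin d → ℕ)).filter (· ∈ A))) (fun A hA => htr A hA)]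
  by_cases hfix : F - x = x
  · simp only [hfix, Finset.pair_eq_singleton, Finset.prod_singleton]
    refine le_trans ?_ (h1 x hxF hfix)
    have : G.image (fun A => ({x} : Finset (Fin d → ℕ)).filter (· ∈ A)) ⊆ {∅} := by
      intro B hB
      obtain ⟨A, hA, rfl⟩ := Finset.mem_image.1 hB
      have : x ∉ A := fun hxA => by
        have := hdisj A hA x hxA
        rw [hfix] at this; exact this hxA
      simp [Finset.filter_singleton, this]
    exact_mod_cast Finset.card_le_card this
  rw [Finset.prod_pair (Ne.symm hfix)]
  by_cases hx0 : x = 0 ∨ x = F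
  · have hww : 1 ≤ w x * w (F - x) := by
      rcases hx0 with rfl | rfl
      · simpa using h0
      · rw [mul_comm]; simpa using h0
    refine le_trans ?_ hww
    have : G.image (fun A => ({x, F - x} : Finset (Fin d → ℕ)).filter (· ∈ A)) ⊆ {{0}} := by
      intro B hB
      obtain ⟨A, hA, rfl⟩ := Finset.mem_image.1 hB
      have hz := (hG A hA).zero
      have ht := (hG A hA).top
      rcases hx0 with rfl | rfl
      · simp [Finset.filter_insert, Finset.filter_singleton, hz, ht]
      · simp [Finset.filter_insert, Finset.filter_singleton, hz, ht]
    exact_mod_cast Finset.card_le_card this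
  push Not at hx0
  refine le_trans ?_ (h2 x hxF hx0.1 hx0.2)
  have : G.image (fun A => ({x, F - x} : Finset (Fin d → ℕ)).filter (· ∈ A)) ⊆
      ((if x ∈ D then ∅ else {{x}}) ∪ (if F - x ∈ D then ∅ else {{F - x}})) ∪ {∅} := by
    intro B hB
    obtain ⟨A, hA, rfl⟩ := Finset.mem_image.1 hB
    by_cases hxA : x ∈ A
    · have h4 := hdisj A hA x hxA
      have h5 : x ∉ D := fun h => hx0.1 (hD A hA x hxA h)
      simp [Finset.filter_insert, Finset.filter_singleton, hxA, h4, h5]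
    · by_cases hxA' : F - x ∈ A
      · have h5 : F - x ∉ D := fun h => by
          have h6 := hD A hA _ hxA' h
          have h7 := hinv x hxF
          rw [h6] at h7
          exact hx0.2 (by simpa using h7.symm)
        simp [Finset.filter_insert, Finset.filter_singleton, hxA, hxA', h5]
      · simp [Finset.filter_insert, Finset.filter_singleton, hxA, hxA']
  have h8 := Finset.card_le_card this
  have h9 : (((if x ∈ D then ∅ else {{x}}) ∪ (if F - x ∈ D then ∅ else {{F - x}})) ∪ {∅} : Finset (Finset (Fin d → ℕ))).card
     ≤ (if x ∈ D then 0 else 1) + (if F - x ∈ D then 0 else 1) + 1 := by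
    refine (Finset.card_union_le _ _).trans (Nat.add_le_add ((Finset.card_union_le _ _).trans (Nat.add_le_add ?_ ?_)) ?_)
    · split_ifs <;> simp
    · split_ifs <;> simp
    · simp
  have h10 := h8.trans h9
  have h11 : ((G.image (fun A => ({x, F - x} : Finset (Fin d → ℕ)).filter (· ∈ A))).card : ℝ) ≤ 
    (((if x ∈ D then 0 else 1) + (if F - x ∈ D then 0 else 1) + 1 : ℕ) : ℝ) := by exact_mod_cast h10
  refine h11.trans (le_of_eq ?_)
  push_cast
  rfl


open Classical in
/-- the chain of `x` under translation by `s` inside the box -/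
noncomputable def chain (F s x : Fin d → ℕ) : Finset (Fin d → ℕ) :=
  (Finset.Iic F).filter (fun y => ∃ k : ℕ, y = x + k • s ∨ x = y + k • s)

lemma mem_chain {F s x y : Fin d → ℕ} : y ∈ chain F s x ↔
    y ≤ F ∧ ∃ k : ℕ, y = x + k • s ∨ x = y + k • s := by
  classical
  simp [chain]

lemma self_mem_chain {F s x : Fin d → ℕ} (h : x ≤ F) : x ∈ chain F s x :=
  mem_chain.2 ⟨h, 0, by simp⟩

lemma chain_symm {F s x y : Fin d → ℕ} (hx : x ≤ F) (h : y ∈ chain F s x) : x ∈ chain F s y := by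
  obtain ⟨_, k, hk⟩ := mem_chain.1 h
  exact mem_chain.2 ⟨hx, k, hk.symm⟩

lemma chain_trans {F s x y z : Fin d → ℕ} (h : y ∈ chain F s x) (h' : z ∈ chain F s y) :
    z ∈ chain F s x := by
  obtain ⟨_, k, hk⟩ := mem_chain.1 h
  obtain ⟨hz, l, hl⟩ := mem_chain.1 h'
  refine mem_chain.2 ⟨hz, ?_⟩
  rcases hk with hk | hk <;> rcases hl with hl | hl
  · exact ⟨k + l, Or.inl (by rw [hl, hk, add_smul]; abel)⟩
  · rcases le_total l k with h1 | h1
    · obtain ⟨e, rfl⟩ := Nat.exists_eq_add_of_le h1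
      refine ⟨e, Or.inl ?_⟩
      have : z + l • s = (x + e • s) + l • s := by rw [← hl, hk, add_smul]; abel
      exact add_right_cancel this
    · obtain ⟨e, rfl⟩ := Nat.exists_eq_add_of_le h1
      refine ⟨e, Or.inr ?_⟩
      have : x + k • s = (z + e • s) + k • s := by rw [← hk, hl, add_smul]; abel
      exact add_right_cancel this
  · rcases le_total k l with h1 | h1
    · obtain ⟨e, rfl⟩ := Nat.exists_eq_add_of_le h1
      refine ⟨e, Or.inl ?_⟩
      rw [hl, hk, add_smul]; abel
    · obtain ⟨e, rfl⟩ := Nat.exists_eq_add_of_le h1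
      refine ⟨e, Or.inr ?_⟩
      rw [hl, hk, add_smul]; abel
  · exact ⟨k + l, Or.inr (by rw [hk, hl, add_smul]; abel)⟩

lemma chain_eq {F s x y : Fin d → ℕ} (hx : x ≤ F) (h : y ∈ chain F s x) :
    chain F s y = chain F s x := by
  ext z
  exact ⟨fun hz => chain_trans h hz, fun hz => chain_trans (chain_symm hx h) hz⟩

lemma sub_sub_box {F y : Fin d → ℕ} (hy : y ≤ F) : F - (F - y) = y := by
  ext i; simp only [Pi.sub_apply]; have : y i ≤ F i := hy i; omega

lemma mem_chain_compl {F s x y : Fin d → ℕ} (hx : x ≤ F) (hy : y ∈ chain F s x) :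
    F - y ∈ chain F s (F - x) := by
  obtain ⟨hyF, k, hk⟩ := mem_chain.1 hy
  refine mem_chain.2 ⟨tsub_le_self, k, ?_⟩
  rcases hk with hk | hk
  · right
    ext i
    have h1 := congrFun hk i
    have h2 : y i ≤ F i := hyF i
    simp only [Pi.sub_apply, Pi.add_apply, Pi.smul_apply] at *
    omega
  · left
    ext i
    have h1 := congrFun hk i
    have h2 : x i ≤ F i := hx i
    simp only [Pi.sub_apply, Pi.add_apply, Pi.smul_apply] at *
    omega

lemma chain_compl {F s x : Fin d → ℕ} (hx : x ≤ F) :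
    (chain F s x).image (fun y => F - y) = chain F s (F - x) := by
  ext z
  rw [Finset.mem_image]
  constructor
  · rintro ⟨y, hy, rfl⟩; exact mem_chain_compl hx hy
  · intro hz
    refine ⟨F - z, ?_, sub_sub_box (mem_chain.1 hz).1⟩
    have := mem_chain_compl tsub_le_self hz
    rwa [sub_sub_box hx] at this

lemma card_chain_compl {F s x : Fin d → ℕ} (hx : x ≤ F) :
    (chain F s (F - x)).card = (chain F s x).card := by
  rw [← chain_compl hx]
  apply Finset.card_image_of_injOn
  intro a ha b hb hab
  have h1 := sub_sub_box (mem_chain.1 ha).1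
  have h2 := sub_sub_box (mem_chain.1 hb).1
  simp only at hab
  rw [← h1, hab, h2]

/-- block -/
noncomputable def blk (F s x : Fin d → ℕ) : Finset (Fin d → ℕ) := chain F s x ∪ chain F s (F - x)

lemma blk_compl {F s x : Fin d → ℕ} (hx : x ≤ F) : blk F s (F - x) = blk F s x := by
  rw [blk, blk, sub_sub_box hx, Finset.union_comm]

lemma blk_eq {F s x y : Fin d → ℕ} (hx : x ≤ F) (h : y ∈ blk F s x) : blk F s y = blk F s x := by
  have key : ∀ {x y}, x ≤ F → y ∈ chain F s x → blk F s y = blk F s x := by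
    intro x y hx h
    rw [blk, blk, chain_eq hx h, chain_eq tsub_le_self (mem_chain_compl hx h)]
  rcases Finset.mem_union.1 h with h | h
  · exact key hx h
  · rw [key tsub_le_self h, blk_compl hx]

lemma blk_fiber {F s x : Fin d → ℕ} (hx : x ≤ F) :
    (Finset.Iic F).filter (fun y => blk F s y = blk F s x) = blk F s x := by
  ext y
  simp only [Finset.mem_filter, Finset.mem_Iic]
  constructor
  · rintro ⟨hy, h⟩
    rw [← h]; exact Finset.mem_union_left _ (self_mem_chain hy)
  · intro h
    refine ⟨?_, blk_eq hx h⟩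
    rcases Finset.mem_union.1 h with h | h
    · exact (mem_chain.1 h).1
    · exact (mem_chain.1 h).1

lemma adm_smul {F s : Fin d → ℕ} {A : Finset (Fin d → ℕ)} (hA : Adm F A) (hs : s ∈ A) {q : Fin d → ℕ}
    (hq : q ∈ A) (k : ℕ) (hk : q + k • s ≤ F) : q + k • s ∈ A := by
  induction k with
  | zero => simpa using hq
  | succ k ih =>
    have e : q + (k + 1) • s = (q + k • s) + s := by rw [add_smul, one_smul, add_assoc]
    rw [e] at hk ⊢
    have : q + k • s ≤ F := le_trans (by intro i; simp) hk
    exact hA.add _ (ih this) _ hs hk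

lemma chain_trace_eq {F s x : Fin d → ℕ} {A A' : Finset (Fin d → ℕ)} (hA : Adm F A) (hs : s ∈ A)
    (hA' : Adm F A') (hs' : s ∈ A') (hx : x ≤ F)
    (hc : (chain F s x ∩ A).card = (chain F s x ∩ A').card) :
    chain F s x ∩ A = chain F s x ∩ A' := by
  have nested : chain F s x ∩ A ⊆ chain F s x ∩ A' ∨ chain F s x ∩ A' ⊆ chain F s x ∩ A := by
    by_contra hcon
    push Not at hcon
    obtain ⟨h1, h2⟩ := hcon
    obtain ⟨p, hp, hp'⟩ := Finset.not_subset.1 h1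
    obtain ⟨q, hq, hq'⟩ := Finset.not_subset.1 h2
    simp only [Finset.mem_inter, not_and] at hp hq hp' hq'
    have hpA' := hp' hp.1
    have hqA := hq' hq.1
    have : p ∈ chain F s q := chain_trans (chain_symm hx hq.1) hp.1
    obtain ⟨hpF, k, hk | hk⟩ := mem_chain.1 this
    · apply hpA'
      rw [hk] at hpF ⊢
      exact adm_smul hA' hs' hq.2 k hpF
    · apply hqA
      have hqF := (mem_chain.1 hq.1).1
      rw [hk] at hqF ⊢
      exact adm_smul hA hs hp.2 k hqF
  rcases nested with h | h
  · exact Finset.eq_of_subset_of_card_le h hc.ge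
  · exact (Finset.eq_of_subset_of_card_le h hc.le).symm

lemma adm_disj {F : Fin d → ℕ} {A : Finset (Fin d → ℕ)} (hA : Adm F A) {y} (hy : y ∈ A) : F - y ∉ A := by
  intro hy'
  have hyF : y ≤ F := by simpa using hA.sub hy
  have : y + (F - y) = F := by
    ext i; simp only [Pi.sub_apply, Pi.add_apply]; have : y i ≤ F i := hyF i; omega
  have h3 := hA.add y hy _ hy' this.le
  rw [this] at h3
  exact hA.top h3

lemma chain_card_add {F s x : Fin d → ℕ} {A : Finset (Fin d → ℕ)} (hA : Adm F A) (hx : x ≤ F) :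
    (chain F s x ∩ A).card + (chain F s (F - x) ∩ A).card ≤ (chain F s x).card := by
  classical
  have h1 : ((chain F s (F - x) ∩ A).image (fun y => F - y)).card = (chain F s (F - x) ∩ A).card := by
    apply Finset.card_image_of_injOn
    intro a ha b hb hab
    simp only [Finset.coe_inter, Set.mem_inter_iff, Finset.mem_coe] at ha hb
    have h1 := sub_sub_box (mem_chain.1 ha.1).1
    have h2 := sub_sub_box (mem_chain.1 hb.1).1
    simp only at hab
    rw [← h1, hab, h2]
  rw [← h1, ← Finset.card_union_of_disjoint]
  · apply Finset.card_le_card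
    apply Finset.union_subset Finset.inter_subset_left
    intro z hz
    obtain ⟨y, hy, rfl⟩ := Finset.mem_image.1 hz
    have := mem_chain_compl tsub_le_self (Finset.mem_inter.1 hy).1
    rwa [sub_sub_box hx] at this
  · rw [Finset.disjoint_left]
    intro z hz hz'
    obtain ⟨y, hy, rfl⟩ := Finset.mem_image.1 hz'
    exact adm_disj hA (Finset.mem_inter.1 hy).2 (Finset.mem_inter.1 hz).2

lemma tri_card (L : ℕ) : (((Finset.range (L + 1)) ×ˢ (Finset.range (L + 1))).filter
    (fun p => p.1 + p.2 ≤ L)).card * 2 ≤ (L + 1) * (L + 2) := by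
  have h : ((Finset.range (L + 1)) ×ˢ (Finset.range (L + 1))).filter (fun p => p.1 + p.2 ≤ L)
      ⊆ (Finset.range (L + 1)).biUnion (fun m => Finset.HasAntidiagonal.antidiagonal m) := by
    intro p
    simp only [Finset.mem_filter, Finset.mem_product, Finset.mem_range, Finset.mem_biUnion,
      Finset.HasAntidiagonal.mem_antidiagonal]
    rintro ⟨_, h⟩; exact ⟨_, by omega, rfl⟩
  have h1 := (Finset.card_le_card h).trans Finset.card_biUnion_le
  simp only [Finset.Nat.card_antidiagonal] at h1
  have h2 : (∑ u ∈ Finset.range (L + 1), (u + 1)) * 2 = (L + 1) * (L + 2) := by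
    clear h h1
    induction L with
    | zero => rfl
    | succ L ih => rw [Finset.sum_range_succ, add_mul, ih]; ring
  rw [← h2]
  exact Nat.mul_le_mul_right _ h1

/-- chain bound -/
lemma chain_lemma (F s : Fin d → ℕ) (G : Finset (Finset (Fin d → ℕ))) (hG : ∀ A ∈ G, Adm F A)
    (hs : ∀ A ∈ G, s ∈ A) (ω : ℕ → ℝ)
    (h1 : ∀ L : ℕ, 1 ≤ L → ((L + 1) * (L + 2) / 2 : ℝ) ≤ ω L ^ (2 * L))
    (h2 : ∀ L : ℕ, 1 ≤ L → (((L / 2 : ℕ) : ℝ) + 1) ≤ ω L ^ L) :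
    (G.card : ℝ) ≤ ∏ x ∈ Finset.Iic F, ω (chain F s x).card := by
  classical
  refine block_lemma (Finset.Iic F) (blk F s) G (fun A hA => (hG A hA).sub) _ ?_
  intro x hx
  have hxF : x ≤ F := by simpa using hx
  rw [blk_fiber hxF]
  have htr : ∀ A ∈ G, A.filter (fun y => blk F s y = blk F s x) = blk F s x ∩ A := by
    intro A hA
    ext y
    have := Finset.ext_iff.1 (blk_fiber (s := s) hxF) y
    simp only [Finset.mem_filter, Finset.mem_Iic, Finset.mem_inter] at this ⊢
    rw [← this]
    constructor
    · rintro ⟨a, b⟩; exact ⟨⟨by simpa using (hG A hA).sub a, b⟩, a⟩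
    · rintro ⟨⟨_, b⟩, a⟩; exact ⟨a, b⟩
  rw [Finset.image_congr (g := fun A => blk F s x ∩ A) (fun A hA => htr A hA)]
  set L := (chain F s x).card with hL
  have hL1 : 1 ≤ L := Finset.card_pos.2 ⟨x, self_mem_chain hxF⟩
  have hconst : ∀ y ∈ blk F s x, ω (chain F s y).card = ω L := by
    intro y hy
    rcases Finset.mem_union.1 hy with h | h
    · rw [chain_eq hxF h]
    · rw [chain_eq tsub_le_self h, card_chain_compl hxF]
  rw [Finset.prod_congr rfl hconst, Finset.prod_const]
  by_cases hself : F - x ∈ chain F s x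
  · have e : chain F s (F - x) = chain F s x := chain_eq hxF hself
    have eb : blk F s x = chain F s x := by rw [blk, e, Finset.union_self]
    rw [eb]
    refine le_trans ?_ (h2 L hL1)
    have : (G.image (fun A => chain F s x ∩ A)).card ≤ (Finset.range (L / 2 + 1)).card := by
      refine Finset.card_le_card_of_injOn Finset.card ?_ ?_
      · intro B hB
        obtain ⟨A, hA, rfl⟩ := Finset.mem_image.1 hB
        have := chain_card_add (s := s) (hG A hA) hxF
        rw [e] at this
        simp only [Finset.coe_range, Set.mem_Iio]
        omega
      · intro B hB B' hB' hc
        obtain ⟨A, hA, rfl⟩ := Finset.mem_image.1 hB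
        obtain ⟨A', hA', rfl⟩ := Finset.mem_image.1 hB'
        exact chain_trace_eq (hG A hA) (hs A hA) (hG A' hA') (hs A' hA') hxF hc
    rw [Finset.card_range] at this
    exact_mod_cast this
  · have hdis : Disjoint (chain F s x) (chain F s (F - x)) := by
      rw [Finset.disjoint_left]
      intro y hy hy'
      exact hself (chain_trans hy (chain_symm tsub_le_self hy'))
    have hcb : (blk F s x).card = 2 * L := by
      rw [blk, Finset.card_union_of_disjoint hdis, card_chain_compl hxF]; ring
    rw [hcb]
    refine le_trans ?_ (h1 L hL1)
    have hinter : ∀ A : Finset (Fin d → ℕ), chain F s x ∩ (blk F s x ∩ A) = chain F s x ∩ A ∧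
        chain F s (F - x) ∩ (blk F s x ∩ A) = chain F s (F - x) ∩ A := by
      intro A
      constructor <;> (ext y; simp only [blk, Finset.mem_inter, Finset.mem_union]; tauto)
    have : (G.image (fun A => blk F s x ∩ A)).card ≤ (((Finset.range (L + 1)) ×ˢ (Finset.range (L + 1))).filter
        (fun p => p.1 + p.2 ≤ L)).card := by
      refine Finset.card_le_card_of_injOn
        (fun B => ((chain F s x ∩ B).card, (chain F s (F - x) ∩ B).card)) ?_ ?_
      · intro B hB
        obtain ⟨A, hA, rfl⟩ := Finset.mem_image.1 hB
        have := chain_card_add (s := s) (hG A hA) hxF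
        simp only [(hinter A).1, (hinter A).2, Finset.coe_filter, Finset.mem_product, Finset.mem_range, Set.mem_ofPred_eq]
        omega
      · intro B hB B' hB' hc
        obtain ⟨A, hA, rfl⟩ := Finset.mem_image.1 hB
        obtain ⟨A', hA', rfl⟩ := Finset.mem_image.1 hB'
        simp only [(hinter A).1, (hinter A).2, (hinter A').1, (hinter A').2, Prod.mk.injEq] at hc
        have e1 := chain_trace_eq (hG A hA) (hs A hA) (hG A' hA') (hs A' hA') hxF hc.1
        have e2 := chain_trace_eq (hG A hA) (hs A hA) (hG A' hA') (hs A' hA') tsub_le_self hc.2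
        show blk F s x ∩ A = blk F s x ∩ A'
        rw [blk, Finset.union_inter_distrib_right, Finset.union_inter_distrib_right, e1, e2]
    have h3 := tri_card L
    have h4 : ((G.image (fun A => blk F s x ∩ A)).card : ℝ) ≤ ((((Finset.range (L + 1)) ×ˢ (Finset.range (L + 1))).filter
        (fun p => p.1 + p.2 ≤ L)).card : ℝ) := by exact_mod_cast this
    have h5 : ((((Finset.range (L + 1)) ×ˢ (Finset.range (L + 1))).filter
        (fun p => p.1 + p.2 ≤ L)).card : ℝ) * 2 ≤ (L + 1) * (L + 2) := by exact_mod_cast h3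
    linarith


lemma NF_trivial (F : Fin d → ℕ) :
    (NF F : ℝ) ≤ Real.exp ((normF F : ℝ) * (Real.log 3 / 2) - Real.log 3) := by
  classical
  refine le_trans (Nat.cast_le.2 (NF_le_card F)) ?_
  by_cases hF : F = 0
  · have : Fam F = ∅ := by
      rw [Finset.eq_empty_iff_forall_notMem]
      intro A hA
      have := mem_Fam.1 hA
      exact this.top (hF ▸ this.zero)
    rw [this]; simp [Real.exp_nonneg]
  have h3 : Real.exp (Real.log 3 / 2) * Real.exp (Real.log 3 / 2) = 3 := by
    rw [← Real.exp_add, add_halves, Real.exp_log (by norm_num)]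
  have h31 : 1 ≤ Real.exp (Real.log 3 / 2) := by
    rw [Real.one_le_exp_iff]; positivity
  have := pair_lemma F (Fam F) (fun A hA => mem_Fam.1 hA) ∅ (by simp)
    (fun x => if x = 0 ∨ x = F then 1 else Real.exp (Real.log 3 / 2)) (by simp) ?_ ?_
  · refine this.trans (le_of_eq ?_)
    rw [Finset.prod_ite]
    simp only [Finset.prod_const_one, one_mul, Finset.prod_const]
    have e : (Finset.Iic F).filter (fun x => ¬ (x = 0 ∨ x = F)) = (Finset.Iic F) \ {0, F} := by
      ext x; simp
    have hc : ((Finset.Iic F) \ {0, F}).card = normF F - 2 := by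
      rw [Finset.card_sdiff_of_subset, normF_eq, Finset.card_pair (Ne.symm hF)]
      intro x; simp only [Finset.mem_insert, Finset.mem_singleton, Finset.mem_Iic]
      rintro (rfl | rfl)
      · simp
      · exact le_rfl
    have hn : 2 ≤ normF F := by
      rw [← normF_eq, ← Finset.card_pair (Ne.symm hF)]
      apply Finset.card_le_card
      intro x; simp only [Finset.mem_insert, Finset.mem_singleton, Finset.mem_Iic]
      rintro (rfl | rfl)
      · simp
      · exact le_rfl
    rw [e, hc, ← Real.exp_nat_mul, Nat.cast_sub hn]
    congr 1; push_cast; ring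
  · intro x _ _
    split_ifs
    · exact le_rfl
    · exact h31
  · intro x hx h0 h1
    have h2 : ¬ (F - x = 0 ∨ F - x = F) := by
      rintro (h | h)
      · have := sub_sub_box hx; rw [h] at this; exact h1 (by simpa using this.symm)
      · have := sub_sub_box hx; rw [h] at this; exact h0 (by simpa using this.symm)
    simp only [h0, h1, h2, if_false, or_self, Finset.notMem_empty, h3]
    norm_num

lemma NF_core (F : Fin d → ℕ) (D : Finset (Fin d → ℕ)) (hDF : D ⊆ Finset.Iic F) (h0D : 0 ∈ D) (M : ℝ)
    (hM : ∀ s ∈ D, s ≠ 0 → (((Fam F).filter (fun A => s ∈ A)).card : ℝ) ≤ M) :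
    (NF F : ℝ) ≤ Real.exp ((normF F : ℝ) * (Real.log 3 / 2) - D.card * Real.log (3 / 2))
      + ((D.card : ℝ) - 1) * M := by
  classical
  refine le_trans (Nat.cast_le.2 (NF_le_card F)) ?_
  have h3 : Real.exp (Real.log 3 / 2) * Real.exp (Real.log 3 / 2) = 3 := by
    rw [← Real.exp_add, add_halves, Real.exp_log (by norm_num)]
  have h3p := Real.exp_pos (Real.log 3 / 2)
  have h31 : 3 / 2 ≤ Real.exp (Real.log 3 / 2) := by nlinarith
  have hsplit : Fam F ⊆ (Fam F).filter (fun A => ∀ x ∈ A, x ∈ D → x = 0) ∪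
      (D.erase 0).biUnion (fun s => (Fam F).filter (fun A => s ∈ A)) := by
    intro A hA
    simp only [Finset.mem_union, Finset.mem_filter, Finset.mem_biUnion, Finset.mem_erase]
    by_cases h : ∀ x ∈ A, x ∈ D → x = 0
    · exact Or.inl ⟨hA, h⟩
    · push Not at h
      obtain ⟨x, h1, h2, h3⟩ := h
      exact Or.inr ⟨x, ⟨h3, h2⟩, hA, h1⟩
  have hc := (Finset.card_le_card hsplit).trans ((Finset.card_union_le _ _).trans
    (Nat.add_le_add_left Finset.card_biUnion_le _))
  have hc' : ((Fam F).card : ℝ) ≤ (((Fam F).filter (fun A => ∀ x ∈ A, x ∈ D → x = 0)).card : ℝ) +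
      ∑ s ∈ D.erase 0, (((Fam F).filter (fun A => s ∈ A)).card : ℝ) := by exact_mod_cast hc
  refine hc'.trans (add_le_add ?_ ?_)
  · have := pair_lemma F ((Fam F).filter (fun A => ∀ x ∈ A, x ∈ D → x = 0))
      (fun A hA => mem_Fam.1 (Finset.mem_filter.1 hA).1) D
      (fun A hA => (Finset.mem_filter.1 hA).2)
      (fun x => Real.exp (Real.log 3 / 2) * if x ∈ D then 2 / 3 else 1) ?_ ?_ ?_
    · refine this.trans (le_of_eq ?_)
      rw [Finset.prod_mul_distrib, Finset.prod_const, normF_eq, ← Finset.prod_filter,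
        Finset.prod_const]
      have e : (Finset.Iic F).filter (· ∈ D) = D := by
        ext x; simp only [Finset.mem_filter]; exact ⟨fun h => h.2, fun h => ⟨hDF h, h⟩⟩
      have e2 : (2 / 3 : ℝ) = Real.exp (- Real.log (3 / 2)) := by
        rw [Real.exp_neg, Real.exp_log (by norm_num)]; norm_num
      rw [e, e2, ← Real.exp_nat_mul, ← Real.exp_nat_mul, ← Real.exp_add]
      congr 1; ring
    · simp only [h0D, if_true]
      split_ifs <;> nlinarith
    · intro x _ _
      split_ifs <;> linarith
    · intro x _ _ _
      rw [mul_mul_mul_comm, h3]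
      split_ifs <;> norm_num
  · calc ∑ s ∈ D.erase 0, (((Fam F).filter (fun A => s ∈ A)).card : ℝ) ≤ ∑ s ∈ D.erase 0, M :=
          Finset.sum_le_sum (fun s hs => hM s (Finset.mem_erase.1 hs).2 (Finset.mem_erase.1 hs).1)
      _ = _ := by
        rw [Finset.sum_const, nsmul_eq_mul, Finset.card_erase_of_mem h0D,
          Nat.cast_sub (Finset.card_pos.2 ⟨0, h0D⟩)]
        simp

lemma NF_box (F : Fin d → ℕ) (β r M : ℝ) (hβ : 0 < β) (hβ1 : β ≤ 1) (hr : 0 < r)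
    (hr2 : r ≤ β ^ d * normF F) (hM0 : 0 ≤ M)
    (hM : ∀ s : Fin d → ℕ, s ≤ F → s ≠ 0 → (∀ i, (s i : ℝ) < β * (F i + 1)) →
      (((Fam F).filter (fun A => s ∈ A)).card : ℝ) ≤ M) :
    (NF F : ℝ) ≤ Real.exp ((normF F : ℝ) * (Real.log 3 / 2) - r * Real.log (3 / 2)) + r * M := by
  classical
  set B : Finset (Fin d → ℕ) := Fintype.piFinset (fun i => Finset.range ⌈β * ((F i : ℝ) + 1)⌉₊) with hB
  have hmem : ∀ s, s ∈ B ↔ ∀ i, (s i : ℝ) < β * (F i + 1) := by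
    intro s; simp only [hB, Fintype.mem_piFinset, Finset.mem_range, Nat.lt_ceil]
  have hBF : B ⊆ Finset.Iic F := by
    intro s hs
    rw [Finset.mem_Iic]
    intro i
    have h1 := (hmem s).1 hs i
    have h2 : (s i : ℝ) < F i + 1 := by
      have : (0 : ℝ) ≤ F i := by positivity
      nlinarith
    have h3 : s i < F i + 1 := by exact_mod_cast h2
    exact Nat.lt_succ_iff.1 h3
  have h0B : 0 ∈ B := by
    rw [hmem]; intro i; simp only [Pi.zero_apply, Nat.cast_zero]; positivity
  have hcard : r ≤ B.card := by
    refine hr2.trans ?_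
    rw [hB, Fintype.card_piFinset]
    simp only [Finset.card_range, normF]
    push_cast
    have : β ^ d = ∏ _i : Fin d, β := by simp
    rw [this, ← Finset.prod_mul_distrib]
    apply Finset.prod_le_prod
    · intros; positivity
    · intros; exact Nat.le_ceil _
  have hm1 : 1 ≤ ⌈r⌉₊ := Nat.one_le_ceil_iff.2 hr
  obtain ⟨D, hD0, hDB, hDc⟩ := Finset.exists_subsuperset_card_eq (s := {0}) (t := B) (n := ⌈r⌉₊)
    (by simpa using h0B) (by simpa using hm1) (Nat.ceil_le.2 hcard)
  have h0D : (0 : Fin d → ℕ) ∈ D := hD0 (by simp)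
  have key := NF_core F D (hDB.trans hBF) h0D M (fun s hs hs0 => hM s
    (by simpa using hBF (hDB hs)) hs0 ((hmem s).1 (hDB hs)))
  rw [hDc] at key
  refine key.trans (add_le_add ?_ ?_)
  · apply Real.exp_le_exp.2
    have h1 : r ≤ (⌈r⌉₊ : ℝ) := Nat.le_ceil r
    have h2 : 0 < Real.log (3 / 2) := Real.log_pos (by norm_num)
    nlinarith
  · apply mul_le_mul_of_nonneg_right _ hM0
    have := Nat.ceil_lt_add_one hr.le
    linarith

lemma pow_step (g : ℝ) (L0 : ℕ) (hg : 0 ≤ g) (h0 : ((L0 + 1) * (L0 + 2) / 2 : ℝ) ≤ g ^ L0)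
    (h1 : ((L0 : ℝ) + 3) ≤ g * (L0 + 1)) (hg1 : 1 ≤ g) :
    ∀ L : ℕ, L0 ≤ L → ((L + 1) * (L + 2) / 2 : ℝ) ≤ g ^ L := by
  intro L hL
  induction L, hL using Nat.le_induction with
  | base => exact h0
  | succ L hL ih =>
    have hL' : (L0 : ℝ) ≤ L := by exact_mod_cast hL
    rw [pow_succ]
    push_cast
    have h3 : ((L : ℝ) + 3) ≤ g * (L + 1) := by nlinarith
    have h4 : ((L + 1) * (L + 2) / 2 : ℝ) * g ≤ g ^ L * g := mul_le_mul_of_nonneg_right ih hg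
    nlinarith

lemma half_of_full (y : ℝ) (hy : 0 ≤ y) (L : ℕ) (h : ((L + 1) * (L + 2) / 2 : ℝ) ≤ y ^ (2 * L)) :
    (((L / 2 : ℕ) : ℝ) + 1) ≤ y ^ L := by
  have h1 : ((L / 2 : ℕ) : ℝ) ≤ L / 2 := Nat.cast_div_le
  rw [show 2 * L = L * 2 by ring, pow_mul] at h
  have h2 : (0:ℝ) ≤ L := by positivity
  have h3 : 0 ≤ y ^ L := by positivity
  have h4 : (0:ℝ) ≤ ((L / 2 : ℕ) : ℝ) := by positivity
  apply le_of_sq_le_sq _ h3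
  nlinarith

lemma chain_exp (F s : Fin d → ℕ) (g : ℝ) (L0 : ℕ) (hL0 : 1 ≤ L0) (hg : 1 ≤ g)
    (h0 : ((L0 + 1) * (L0 + 2) / 2 : ℝ) ≤ g ^ L0)
    (h1 : ((L0 : ℝ) + 3) ≤ g * (L0 + 1)) :
    (((Fam F).filter (fun A => s ∈ A)).card : ℝ) ≤
      ∏ x ∈ Finset.Iic F, Real.exp (if (chain F s x).card < L0 then Real.log 3 / 2 else Real.log g / 2) := by
  classical
  have hfull : ∀ L : ℕ, 1 ≤ L → ((L + 1) * (L + 2) / 2 : ℝ) ≤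
      (Real.exp (if L < L0 then Real.log 3 / 2 else Real.log g / 2)) ^ (2 * L) := by
    intro L hL
    rw [pow_mul, ← Real.exp_nat_mul]
    split_ifs with h
    · rw [show ((2 : ℕ) : ℝ) * (Real.log 3 / 2) = Real.log 3 by push_cast; ring, Real.exp_log (by norm_num)]
      exact pow_step 3 1 (by norm_num) (by norm_num) (by norm_num) (by norm_num) L hL
    · rw [show ((2 : ℕ) : ℝ) * (Real.log g / 2) = Real.log g by push_cast; ring, Real.exp_log (by linarith)]
      exact pow_step g L0 (by linarith) h0 h1 hg L (by omega)
  exact chain_lemma F s _ (fun A hA => mem_Fam.1 (Finset.mem_filter.1 hA).1)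
    (fun A hA => (Finset.mem_filter.1 hA).2)
    (fun L => Real.exp (if L < L0 then Real.log 3 / 2 else Real.log g / 2)) hfull
    (fun L hL => half_of_full _ (Real.exp_nonneg _) L (hfull L hL))

lemma two_le_chain {F s x : Fin d → ℕ} (hs : s ≠ 0) (hx : x ≤ F) (h : x + s ≤ F ∨ s ≤ x) :
    2 ≤ (chain F s x).card := by
  classical
  rcases h with h | h
  · rw [← Finset.card_pair (a := x) (b := x + s) (by simpa using hs)]
    apply Finset.card_le_card
    intro y hy
    simp only [Finset.mem_insert, Finset.mem_singleton] at hy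
    rcases hy with rfl | rfl
    · exact self_mem_chain hx
    · exact mem_chain.2 ⟨h, 1, Or.inl (by simp)⟩
  · have e : (x - s) + s = x := tsub_add_cancel_of_le h
    have hne : x ≠ x - s := by
      intro h'
      rw [← h'] at e
      exact hs (by simpa using e)
    rw [← Finset.card_pair hne]
    apply Finset.card_le_card
    intro y hy
    simp only [Finset.mem_insert, Finset.mem_singleton] at hy
    rcases hy with rfl | rfl
    · exact self_mem_chain hx
    · exact mem_chain.2 ⟨tsub_le_self.trans hx, 1, Or.inr (by rw [one_smul]; exact e.symm)⟩

lemma iso_count (F s : Fin d → ℕ) (hsF : s ≤ F) (hs : s ≠ 0) :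
    (((Finset.Iic F).filter (fun x => (chain F s x).card < 2)).card : ℝ) ≤
      (normF F : ℝ) - 2 * ∏ i, ((F i : ℝ) + 1 - s i) + ∏ i, ((F i + 1 - 2 * s i : ℕ) : ℝ) := by
  classical
  set U := Finset.Iic (F - s) ∪ Finset.Icc s F with hU
  have hsub : (Finset.Iic F).filter (fun x => (chain F s x).card < 2) ⊆ Finset.Iic F \ U := by
    intro x hx
    simp only [Finset.mem_filter, Finset.mem_Iic] at hx
    simp only [hU, Finset.mem_sdiff, Finset.mem_union, Finset.mem_Iic, Finset.mem_Icc]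
    refine ⟨hx.1, ?_⟩
    intro h
    have : 2 ≤ (chain F s x).card := by
      apply two_le_chain hs hx.1
      rcases h with h | h
      · left
        calc x + s ≤ (F - s) + s := by gcongr
          _ = F := tsub_add_cancel_of_le hsF
      · exact Or.inr h.1
    omega
  have hUF : U ⊆ Finset.Iic F := by
    intro x
    simp only [hU, Finset.mem_union, Finset.mem_Iic, Finset.mem_Icc]
    rintro (h | h)
    · exact h.trans tsub_le_self
    · exact h.2
  have h1 := Finset.card_le_card hsub
  rw [Finset.card_sdiff_of_subset hUF, normF_eq] at h1
  have h2 : U.card ≤ normF F := by rw [← normF_eq]; exact Finset.card_le_card hUF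
  have h3 := Finset.card_union_add_card_inter (Finset.Iic (F - s)) (Finset.Icc s F)
  rw [← hU] at h3
  have e1 : ((Finset.Iic (F - s)).card : ℝ) = ∏ i, ((F i : ℝ) + 1 - s i) := by
    rw [normF_eq, normF]
    push_cast
    apply Finset.prod_congr rfl
    intro i _
    rw [Pi.sub_apply, Nat.cast_sub (hsF i)]; ring
  have e2 : ((Finset.Icc s F).card : ℝ) = ∏ i, ((F i : ℝ) + 1 - s i) := by
    rw [Pi.card_Icc]
    push_cast
    apply Finset.prod_congr rfl
    intro i _
    have : s i ≤ F i := hsF i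
    rw [Nat.card_Icc, Nat.cast_sub (by omega)]; push_cast; ring
  have e3 : ((Finset.Iic (F - s) ∩ Finset.Icc s F).card : ℝ) = ∏ i, ((F i + 1 - 2 * s i : ℕ) : ℝ) := by
    have : Finset.Iic (F - s) ∩ Finset.Icc s F = Finset.Icc s (F - s) := by
      ext x
      simp only [Finset.mem_inter, Finset.mem_Iic, Finset.mem_Icc]
      exact ⟨fun h => ⟨h.2.1, h.1⟩, fun h => ⟨h.2, h.1, h.2.trans tsub_le_self⟩⟩
    rw [this, Pi.card_Icc]
    push_cast
    apply Finset.prod_congr rfl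
    intro i _
    have : s i ≤ F i := hsF i
    rw [Nat.card_Icc, Pi.sub_apply]
    congr 1
    omega
  have h1' : (((Finset.Iic F).filter (fun x => (chain F s x).card < 2)).card : ℝ) ≤ normF F - U.card := by
    rw [← Nat.cast_sub h2]; exact_mod_cast h1
  have h3' : (U.card : ℝ) + ((Finset.Iic (F - s) ∩ Finset.Icc s F).card : ℝ) =
    ((Finset.Iic (F - s)).card : ℝ) + ((Finset.Icc s F).card : ℝ) := by exact_mod_cast h3
  rw [e1, e2, e3] at h3'
  linarith

lemma chain_iso (F s : Fin d → ℕ) (I : ℝ)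
    (hI : (((Finset.Iic F).filter (fun x => (chain F s x).card < 2)).card : ℝ) ≤ I) :
    (((Fam F).filter (fun A => s ∈ A)).card : ℝ) ≤
      Real.exp ((normF F : ℝ) * (Real.log 6 / 4) + (Real.log 3 / 2 - Real.log 6 / 4) * I) := by
  have hq : Real.sqrt 6 ^ 2 = 6 := Real.sq_sqrt (by norm_num)
  have hq2 : 2 ≤ Real.sqrt 6 := by
    apply Real.le_sqrt_of_sq_le; norm_num
  refine (chain_exp F s (Real.sqrt 6) 2 (by norm_num) (by linarith) (by rw [hq]; norm_num) (by push_cast; nlinarith)).trans ?_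
  rw [← Real.exp_sum]
  apply Real.exp_le_exp.2
  rw [Real.log_sqrt (by norm_num)]
  have h63 : Real.log 6 / 4 ≤ Real.log 3 / 2 := by
    have : Real.log 6 ≤ Real.log (3 ^ 2) := Real.log_le_log (by norm_num) (by norm_num)
    rw [Real.log_pow] at this; push_cast at this; linarith
  have e : ∀ x ∈ Finset.Iic F, (if (chain F s x).card < 2 then Real.log 3 / 2 else Real.log 6 / 2 / 2) =
      Real.log 6 / 4 + (if (chain F s x).card < 2 then (Real.log 3 / 2 - Real.log 6 / 4) else 0) := by
    intro x _; split_ifs <;> ring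
  rw [Finset.sum_congr rfl e, Finset.sum_add_distrib, Finset.sum_const, ← Finset.sum_filter, Finset.sum_const,
    normF_eq, nsmul_eq_mul, nsmul_eq_mul]
  nlinarith

lemma normF_pos (F : Fin d → ℕ) : (0 : ℝ) < normF F := by
  unfold normF; push_cast; positivity

lemma iso_general (F s : Fin d → ℕ) (β : ℝ) (hβ1 : β ≤ 1) (hsF : s ≤ F)
    (hsβ : ∀ i, (s i : ℝ) < β * (F i + 1)) :
    (normF F : ℝ) - 2 * ∏ i, ((F i : ℝ) + 1 - s i) + ∏ i, ((F i + 1 - 2 * s i : ℕ) : ℝ) ≤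
      normF F * (1 - (1 - β) ^ d) ^ 2 := by
  set n : ℝ := (normF F : ℝ) with hn
  have hn0 : 0 < n := normF_pos F
  have hn' : n = ∏ i, ((F i : ℝ) + 1) := by rw [hn, normF]; push_cast; rfl
  set A := ∏ i, ((F i : ℝ) + 1 - s i) with hA
  set B := ∏ i, ((F i + 1 - 2 * s i : ℕ) : ℝ) with hB
  have hsR : ∀ i, (s i : ℝ) ≤ F i := fun i => by exact_mod_cast hsF i
  have h1 : B * n ≤ A ^ 2 := by
    rw [hB, hn', hA, ← Finset.prod_mul_distrib, ← Finset.prod_pow]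
    apply Finset.prod_le_prod
    · intros; positivity
    · intro i _
      rcases le_total (2 * s i) (F i + 1) with h | h
      · rw [Nat.cast_sub h]; push_cast
        nlinarith [sq_nonneg (s i : ℝ)]
      · rw [Nat.sub_eq_zero_of_le h]; simp; positivity
  have h2 : (1 - β) ^ d * n ≤ A := by
    rw [hn', hA]
    have : (1 - β) ^ d = ∏ _i : Fin d, (1 - β) := by simp
    rw [this, ← Finset.prod_mul_distrib]
    apply Finset.prod_le_prod
    · intro i _
      have : (0:ℝ) ≤ 1 - β := by linarith
      positivity
    · intro i _
      have := hsβ i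
      nlinarith
  have h3 : A ≤ n := by
    rw [hn', hA]
    apply Finset.prod_le_prod
    · intro i _; have := hsR i; linarith
    · intro i _; have : (0:ℝ) ≤ s i := by positivity
      linarith
  have h4 : (n - 2 * A + B) * n ≤ (n * (1 - (1 - β) ^ d) ^ 2) * n := by
    have h5 : (n - A) ^ 2 ≤ (n * (1 - (1 - β) ^ d)) ^ 2 := by
      apply pow_le_pow_left₀ (by linarith)
      linarith
    nlinarith
  exact le_of_mul_le_mul_right h4 hn0

lemma iso_two (F s : Fin 2 → ℕ) (β : ℝ) (hβ1 : β ≤ 1 / 2)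
    (hsβ : ∀ i, (s i : ℝ) < β * (F i + 1)) :
    (normF F : ℝ) - 2 * ∏ i, ((F i : ℝ) + 1 - s i) + ∏ i, ((F i + 1 - 2 * s i : ℕ) : ℝ) ≤
      normF F * (2 * β ^ 2) := by
  have hle : ∀ i, 2 * s i ≤ F i + 1 := by
    intro i
    have h := hsβ i
    have : (2 * s i : ℝ) ≤ F i + 1 := by
      have : (0:ℝ) ≤ F i := by positivity
      nlinarith
    exact_mod_cast this
  unfold normF
  simp only [Fin.prod_univ_two]
  rw [Nat.cast_sub (hle 0), Nat.cast_sub (hle 1)]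
  push_cast
  have h0 := hsβ 0
  have h1 := hsβ 1
  have p0 : (0:ℝ) ≤ s 0 := by positivity
  have p1 : (0:ℝ) ≤ s 1 := by positivity
  have := mul_le_mul h0.le h1.le p1 (p0.trans h0.le)
  nlinarith

end helper
section numeric

lemma nlog3 : 1.0986 ≤ Real.log 3 ∧ Real.log 3 ≤ 1.09862 ∧ 1.0986045 ≤ Real.log 3 := by
  have h2 := Real.log_two_gt_d9
  have h2' := Real.log_two_lt_d9
  have e : Real.log ((3:ℝ) ^ 12 / 2 ^ 19) = 12 * Real.log 3 - 19 * Real.log 2 := by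
    rw [Real.log_div (by norm_num) (by norm_num), Real.log_pow, Real.log_pow]; push_cast; ring
  have a := Real.log_le_sub_one_of_pos (show (0:ℝ) < (3:ℝ) ^ 12 / 2 ^ 19 by norm_num)
  have b := Real.one_sub_inv_le_log_of_pos (show (0:ℝ) < (3:ℝ) ^ 12 / 2 ^ 19 by norm_num)
  rw [e] at a b
  norm_num at a b
  refine ⟨?_, ?_, ?_⟩ <;> norm_num at * <;> linarith

lemma nlog5 : Real.log 5 ≤ 1.609532 := by
  have h2' := Real.log_two_lt_d9
  have e : Real.log ((5:ℝ) ^ 3 / 2 ^ 7) = 3 * Real.log 5 - 7 * Real.log 2 := by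
    rw [Real.log_div (by norm_num) (by norm_num), Real.log_pow, Real.log_pow]; push_cast; ring
  have a := Real.log_le_sub_one_of_pos (show (0:ℝ) < (5:ℝ) ^ 3 / 2 ^ 7 by norm_num)
  rw [e] at a
  norm_num at a
  norm_num at *; linarith

lemma nphi : 0.481206 ≤ Real.log ((1 + Real.sqrt 5) / 2) := by
  have h3 := nlog3.2.2
  have h2 := Real.log_two_gt_d9
  have hs : (2.236067:ℝ) ≤ Real.sqrt 5 := by
    apply Real.le_sqrt_of_sq_le; norm_num
  have hs' : (1.6180335:ℝ) ≤ (1 + Real.sqrt 5) / 2 := by linarith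
  have h := Real.log_le_log (by norm_num) hs'
  have e : Real.log ((1.6180335:ℝ) ^ 6 / (2 * 3 ^ 2)) = 6 * Real.log 1.6180335 - Real.log 2 - 2 * Real.log 3 := by
    rw [Real.log_div (by norm_num) (by norm_num), Real.log_pow, Real.log_mul (by norm_num) (by norm_num), Real.log_pow]; push_cast; ring
  have b := Real.one_sub_inv_le_log_of_pos (show (0:ℝ) < ((1.6180335:ℝ) ^ 6 / (2 * 3 ^ 2)) by norm_num)
  rw [e] at b
  have c : -0.003116 ≤ 1 - ((1.6180335:ℝ) ^ 6 / (2 * 3 ^ 2))⁻¹ := by norm_num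
  norm_num at *; linarith

lemma nq : 0.0788 ≤ Real.log ((1 + Real.sqrt 5) / 2) - Real.log 5 / 4 := by
  have := nphi; have := nlog5
  norm_num at *; linarith

lemma ncomp : Real.log 3 ≤ 2.71 * Real.log (3 / 2) := by
  rw [Real.log_div (by norm_num) (by norm_num)]
  have := nlog3.2.2; have := Real.log_two_lt_d9
  norm_num at *; linarith

lemma nsix : Real.log 6 / 4 ≤ 0.44795 ∧ Real.log 3 / 2 - Real.log 6 / 4 ≤ 0.10138 ∧ 0 ≤ Real.log 3 / 2 - Real.log 6 / 4 := by
  have e : Real.log 6 = Real.log 2 + Real.log 3 := by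
    rw [← Real.log_mul (by norm_num) (by norm_num)]; norm_num
  rw [e]
  have := nlog3; have := Real.log_two_lt_d9; have := Real.log_two_gt_d9
  norm_num at *; refine ⟨?_, ?_, ?_⟩ <;> linarith

lemma n15 : Real.log 15 / 8 ≤ 0.33853 := by
  have e : Real.log 15 = Real.log 5 + Real.log 3 := by
    rw [← Real.log_mul (by norm_num) (by norm_num)]; norm_num
  rw [e]
  have := nlog3; have := nlog5
  norm_num at *; linarith

lemma rhs_eq (ε : ℝ) (d n : ℕ) :
    Real.sqrt 3 ^ ((1 - 2 * ε ^ d) * (n : ℝ)) +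
        ε ^ d * (n : ℝ) * ((1 + Real.sqrt 5) / 2) ^ n *
          (((1 + Real.sqrt 5) / 2) / (5 : ℝ) ^ ((1 : ℝ) / 4)) ^
            ((1 - (1 - ε) ^ d) * (n : ℝ)) =
    Real.exp (n * (Real.log 3 / 2) - ε ^ d * n * Real.log 3) +
      ε ^ d * n * Real.exp (n * Real.log ((1 + Real.sqrt 5) / 2) +
        (1 - (1 - ε) ^ d) * n * (Real.log ((1 + Real.sqrt 5) / 2) - Real.log 5 / 4)) := by
  have hφ : 0 < (1 + Real.sqrt 5) / 2 := by positivity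
  rw [Real.rpow_def_of_pos (by positivity), Real.rpow_def_of_pos (by positivity), Real.log_sqrt (by norm_num),
    Real.log_div hφ.ne' (by positivity), Real.log_rpow (by norm_num), Real.exp_add, Real.exp_nat_mul,
    Real.exp_log hφ]
  congr 1
  · congr 1; ring
  · rw [mul_assoc]; congr 3; ring
end numeric
section poly

lemma p4A (r : ℝ) (h0 : 0 ≤ r) (h1 : 0.135 ≤ r ^ 2) (h2 : r ^ 2 ≤ 0.5) :
    0.10138 * (1 - r ^ 3) ^ 2 ≤ -0.02875 + 0.1505 * (1 - r ^ 2) := by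
  have a : 0.36 ≤ r := by nlinarith
  have b : r ≤ 0.7072 := by nlinarith
  nlinarith [mul_nonneg (sub_nonneg.2 a) (sub_nonneg.2 b), mul_nonneg (mul_nonneg (sub_nonneg.2 a) (sub_nonneg.2 b)) h0, mul_nonneg (mul_nonneg (sub_nonneg.2 a) (sub_nonneg.2 b)) (pow_nonneg h0 2), mul_nonneg (mul_nonneg (sub_nonneg.2 a) (sub_nonneg.2 b)) (pow_nonneg h0 3), mul_nonneg (mul_nonneg (sub_nonneg.2 a) (sub_nonneg.2 b)) (pow_nonneg h0 4)]

lemma p4B (r : ℝ) (h0 : 0 ≤ r) (h1 : 0.5 ≤ r ^ 2) (h2 : r ^ 2 ≤ 1) :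
    0.10138 * (1 - r ^ 3) ^ 2 + 0.009 ≤ 0.03325 + 0.0788 * (1 - r ^ 2) := by
  have a : 0.7071 ≤ r := by nlinarith
  have b : r ≤ 1 := by nlinarith
  have c : 1 - r ^ 3 ≤ 0.647 := by nlinarith [pow_le_pow_left₀ (by norm_num) a 3]
  have c0 : 0 ≤ 1 - r ^ 3 := by nlinarith [pow_le_one₀ h0 b (n := 3)]
  have e : 1 - r ^ 3 ≤ 1.5 * (1 - r ^ 2) := by nlinarith [mul_nonneg (sub_nonneg.2 b) (sq_nonneg (r-1)), sq_nonneg (r-1)]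
  nlinarith

lemma p3B (ε : ℝ) (h0 : 0 ≤ ε) (h1 : ε ≤ 0.2064) :
    0.10138 * (1 - (1 - 1.3942 * ε) ^ 3) ^ 2 + 0.009 ≤ 0.03325 + 0.0788 * (1 - (1 - ε) ^ 3) := by
  have e : 1 - (1 - 1.3942 * ε) ^ 3 ≤ 1.3942 * (1 - (1 - ε) ^ 3) := by nlinarith [mul_nonneg h0 h0, mul_nonneg (mul_nonneg h0 h0) h0]
  have c0 : 0 ≤ 1 - (1 - 1.3942 * ε) ^ 3 := by nlinarith [mul_nonneg h0 h0, mul_nonneg (mul_nonneg h0 h0) h0]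
  have f : 1 - (1 - ε) ^ 3 ≤ 0.501 := by nlinarith [pow_le_pow_left₀ (by norm_num) (show 1 - 0.2064 ≤ 1 - ε by linarith) 3]
  nlinarith [pow_le_pow_left₀ c0 e 2]

lemma p3A (ε : ℝ) (h0 : 0.206 ≤ ε) (h1 : ε ≤ 0.488) :
    0.10138 * (1 - (1 - 1.3942 * ε) ^ 3) ^ 2 ≤ -0.02875 + 0.1505 * (1 - (1 - ε) ^ 3) := by
  have step : ∀ a b : ℝ, 0 ≤ a → b ≤ 0.7 → a ≤ ε → ε ≤ b → 
     0.10138 * (1 - (1 - 1.3942 * b) ^ 3) ^ 2 ≤ -0.02875 + 0.1505 * (1 - (1 - a) ^ 3) → 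
     0.10138 * (1 - (1 - 1.3942 * ε) ^ 3) ^ 2 ≤ -0.02875 + 0.1505 * (1 - (1 - ε) ^ 3) := by
    intro a b ha hb hae heb h
    have h1 : (1 - 1.3942 * b) ^ 3 ≤ (1 - 1.3942 * ε) ^ 3 := pow_le_pow_left₀ (by linarith) (by linarith) 3
    have h2 : (1 - ε) ^ 3 ≤ (1 - a) ^ 3 := pow_le_pow_left₀ (by linarith) (by linarith) 3
    have h3 : (1 - 1.3942 * ε) ^ 3 ≤ 1 := pow_le_one₀ (by linarith) (by linarith)
    have := pow_le_pow_left₀ (by linarith) (show 1 - (1 - 1.3942 * ε) ^ 3 ≤ 1 - (1 - 1.3942 * b) ^ 3 by linarith) 2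
    linarith
  obtain ⟨k, hk⟩ : ∃ k : ℕ, k = ⌊ε * 100⌋₊ := ⟨_, rfl⟩
  have hk1 : (k : ℝ) ≤ ε * 100 := by rw [hk]; exact Nat.floor_le (by linarith)
  have hk2 : ε * 100 < k + 1 := by rw [hk]; exact Nat.lt_floor_add_one _
  have l1 : 20 ≤ k := by
    have : (19 : ℝ) < k := by linarith
    have : 19 < k := by exact_mod_cast this
    omega
  have l2 : k ≤ 48 := by
    have : (k : ℝ) < 49 := by linarith
    have : k < 49 := by exact_mod_cast this
    omega
  refine step (k / 100) ((k + 1) / 100) (by positivity) ?_ (by linarith) (by linarith) ?_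
  · have : (k : ℝ) ≤ 48 := by exact_mod_cast l2
    linarith
  · interval_cases k <;> norm_num

lemma p4pow (ε : ℝ) (h0 : 0 ≤ ε) (h1 : ε ≤ 0.5) : (1 - ε) ^ 3 ≤ (1 - 1.2831 * ε) ^ 2 := by
  have : 0 ≤ 0.4338 - 1.3537 * ε + ε ^ 2 := by nlinarith
  nlinarith [mul_nonneg h0 this, mul_nonneg h0 h0]
end poly
section fin
variable {d : ℕ}

/-- the right-hand side in exponential form -/
noncomputable def RH (ε : ℝ) (d n : ℕ) : ℝ :=
    Real.exp (n * (Real.log 3 / 2) - ε ^ d * n * Real.log 3) +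
      ε ^ d * n * Real.exp (n * Real.log ((1 + Real.sqrt 5) / 2) +
        (1 - (1 - ε) ^ d) * n * (Real.log ((1 + Real.sqrt 5) / 2) - Real.log 5 / 4))

lemma second_le (ε : ℝ) (n : ℕ) (hε0 : 0 < ε) (hε1 : ε < 1) :
    ε ^ d * n * Real.exp (n * (0.4812 + 0.0788 * (1 - (1 - ε) ^ d))) ≤
    ε ^ d * n * Real.exp (n * Real.log ((1 + Real.sqrt 5) / 2) +
        (1 - (1 - ε) ^ d) * n * (Real.log ((1 + Real.sqrt 5) / 2) - Real.log 5 / 4)) := by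
  have h1 := nphi
  have h2 := nq
  have hu : 0 ≤ 1 - (1 - ε) ^ d := sub_nonneg.2 (pow_le_one₀ (by linarith) (by linarith))
  have hn : (0:ℝ) ≤ n := by positivity
  apply mul_le_mul_of_nonneg_left _ (by positivity)
  apply Real.exp_le_exp.2
  have := mul_le_mul_of_nonneg_left h2 (mul_nonneg hu hn)
  have := mul_le_mul_of_nonneg_left (show 0.4812 ≤ Real.log ((1 + Real.sqrt 5) / 2) by norm_num at *; linarith) hn
  linarith

lemma fin_small (F : Fin d → ℕ) (ε : ℝ) (hε0 : 0 < ε) (hT : ε ^ d * normF F ≤ 1) :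
    (NF F : ℝ) ≤ RH ε d (normF F) := by
  refine (NF_trivial F).trans ?_
  have h3 := nlog3.1
  have : Real.exp ((normF F : ℝ) * (Real.log 3 / 2) - Real.log 3) ≤
      Real.exp ((normF F : ℝ) * (Real.log 3 / 2) - ε ^ d * normF F * Real.log 3) := by
    apply Real.exp_le_exp.2
    have := mul_le_mul_of_nonneg_right hT (show 0 ≤ Real.log 3 by norm_num at *; linarith)
    linarith
  refine this.trans (le_add_of_nonneg_right ?_)
  positivity

lemma fin_second (F : Fin d → ℕ) (ε : ℝ) (hε0 : 0 < ε) (hε1 : ε < 1)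
    (h : (NF F : ℝ) ≤ ε ^ d * normF F * Real.exp (normF F * (0.4812 + 0.0788 * (1 - (1 - ε) ^ d)))) :
    (NF F : ℝ) ≤ RH ε d (normF F) :=
  (h.trans (second_le ε _ hε0 hε1)).trans (le_add_of_nonneg_left (Real.exp_pos _).le)

lemma fin_triv (F : Fin d → ℕ) (ε w : ℝ) (hε0 : 0 < ε) (hε1 : ε < 1)
    (hT : Real.exp w ≤ ε ^ d * normF F)
    (h : normF F * (0.06811 - 0.0788 * (1 - (1 - ε) ^ d)) ≤ 1.0986 + w) :
    (NF F : ℝ) ≤ RH ε d (normF F) := by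
  apply fin_second F ε hε0 hε1
  refine (NF_trivial F).trans ?_
  refine le_trans ?_ (mul_le_mul_of_nonneg_right hT (Real.exp_pos _).le)
  rw [← Real.exp_add]
  apply Real.exp_le_exp.2
  have h3 := nlog3
  have hn : (0:ℝ) ≤ normF F := by positivity
  have := mul_le_mul_of_nonneg_left (show Real.log 3 / 2 ≤ 0.54931 by norm_num at *; linarith) hn
  norm_num at *
  linarith

lemma fin_box (F : Fin d → ℕ) (ε β ι : ℝ) (hε0 : 0 < ε) (hε1 : ε < 1) (hβ : 0 < β) (hβ1 : β ≤ 1)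
    (hβd : 2.71 * ε ^ d ≤ β ^ d) (hι : 0 ≤ ι)
    (hiso : ∀ s : Fin d → ℕ, s ≤ F → (∀ i, (s i : ℝ) < β * (F i + 1)) →
      (normF F : ℝ) - 2 * ∏ i, ((F i : ℝ) + 1 - s i) + ∏ i, ((F i + 1 - 2 * s i : ℕ) : ℝ) ≤
        normF F * ι)
    (h : 1 ≤ normF F * (0.03325 + 0.0788 * (1 - (1 - ε) ^ d) - 0.10138 * ι)) :
    (NF F : ℝ) ≤ RH ε d (normF F) := by
  have hn := normF_pos F
  set n : ℝ := (normF F : ℝ) with hnn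
  have hT : 0 < ε ^ d * n := by positivity
  have key := NF_box F β (2.71 * (ε ^ d * n))
    (Real.exp (n * (Real.log 6 / 4) + (Real.log 3 / 2 - Real.log 6 / 4) * (n * ι)))
    hβ hβ1 (by positivity)
    (by rw [← mul_assoc]; exact mul_le_mul_of_nonneg_right hβd hn.le)
    (Real.exp_pos _).le
    (fun s hs hs0 hsβ => chain_iso F s _ ((iso_count F s hs hs0).trans (hiso s hs hsβ)))
  refine key.trans ?_
  refine le_trans ?_ (add_le_add_right (second_le ε _ hε0 hε1) _)
  rw [← hnn]
  apply add_le_add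
  · apply Real.exp_le_exp.2
    have := mul_le_mul_of_nonneg_left ncomp hT.le
    linarith
  · rw [mul_comm (2.71:ℝ), mul_assoc]
    apply mul_le_mul_of_nonneg_left _ hT.le
    have e1 : (2.71:ℝ) ≤ Real.exp 1 := by
      have := Real.exp_one_gt_d9
      norm_num at *; linarith
    refine (mul_le_mul_of_nonneg_right e1 (Real.exp_pos _).le).trans ?_
    rw [← Real.exp_add]
    apply Real.exp_le_exp.2
    obtain ⟨a, b, c⟩ := nsix
    have a' := mul_le_mul_of_nonneg_left a hn.le
    have b' := mul_le_mul_of_nonneg_right b (mul_nonneg hn.le hι)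
    linarith

/-- when the trivial bound is not enough -/
lemma fin_A (n u ι : ℝ) (h : 1.0986 < n * (0.06811 - 0.0788 * u)) (hn : 0 < n)
    (hA : 0.10138 * ι ≤ -0.02875 + 0.1505 * u) (hu : 0 ≤ u) :
    1 ≤ n * (0.03325 + 0.0788 * u - 0.10138 * ι) := by
  have : (0.06811 - 0.0788 * u) / 1.0986 ≤ 0.03325 + 0.0788 * u - 0.10138 * ι := by
    rw [div_le_iff₀ (by norm_num)]
    linarith
  refine le_trans ?_ (mul_le_mul_of_nonneg_left this hn.le)
  rw [← mul_div_assoc, le_div_iff₀ (by norm_num)]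
  linarith

lemma case_ge3 (F : Fin d → ℕ) (hd : 3 ≤ d) (ε : ℝ) (hε0 : 0 < ε) (hε1 : ε < 1)
    (hT : 1 ≤ ε ^ d * normF F)
    (hf : 1.0986 < normF F * (0.06811 - 0.0788 * (1 - (1 - ε) ^ d))) :
    (NF F : ℝ) ≤ RH ε d (normF F) := by
  have hn := normF_pos F
  have hρ0 : 0 ≤ (1 - ε) ^ d := pow_nonneg (by linarith) _
  have hρ1 : (1 - ε) ^ d ≤ 1 := pow_le_one₀ (by linarith) (by linarith)
  have hρ : 0.135 < (1 - ε) ^ d := by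
    by_contra hc
    push Not at hc
    have : 0.06811 - 0.0788 * (1 - (1 - ε) ^ d) ≤ 0 := by norm_num at *; linarith
    have := mul_nonpos_of_nonneg_of_nonpos hn.le this
    norm_num at *; linarith
  have h3 : (1 - ε) ^ d ≤ (1 - ε) ^ 3 := pow_le_pow_of_le_one (by linarith) (by linarith) hd
  have hε488 : ε ≤ 0.488 := by
    by_contra hc
    push Not at hc
    have := pow_le_pow_left₀ (by linarith) (show 1 - ε ≤ 0.512 by norm_num at *; linarith) 3
    norm_num at *; linarith
  -- the small regime
  have hB : ∀ ι : ℝ, 0.5 ≤ (1 - ε) ^ d → 0.10138 * ι + 0.009 ≤ 0.03325 + 0.0788 * (1 - (1 - ε) ^ d) →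
      1 ≤ normF F * (0.03325 + 0.0788 * (1 - (1 - ε) ^ d) - 0.10138 * ι) := by
    intro ι h5 hι
    have hε : ε ≤ 0.2064 := by
      by_contra hc
      push Not at hc
      have := pow_le_pow_left₀ (by linarith) (show 1 - ε ≤ 0.7936 by norm_num at *; linarith) 3
      norm_num at *; linarith
    have e1 : ε ^ d ≤ ε ^ 3 := pow_le_pow_of_le_one hε0.le hε1.le hd
    have e2 : ε ^ 3 ≤ 0.009 := (pow_le_pow_left₀ hε0.le hε 3).trans (by norm_num)
    have e3 := mul_le_mul_of_nonneg_right (e1.trans e2) hn.le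
    have e4 := mul_le_mul_of_nonneg_left (show 0.009 ≤ 0.03325 + 0.0788 * (1 - (1 - ε) ^ d) - 0.10138 * ι by linarith) hn.le
    linarith
  rcases Nat.lt_or_ge 3 d with h4 | h4
  · -- `d ≥ 4`
    have h4' : (1 - ε) ^ d ≤ (1 - ε) ^ 4 := pow_le_pow_of_le_one (by linarith) (by linarith) h4
    have hβ0 : 0 ≤ 1 - 1.2831 * ε := by norm_num at *; linarith
    refine fin_box F ε (1.2831 * ε) ((1 - (1 - 1.2831 * ε) ^ d) ^ 2) hε0 hε1 (by positivity)
      (by linarith) ?_ (by positivity)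
      (fun s hs hsβ => iso_general F s _ (by linarith) hs hsβ) ?_
    · rw [mul_pow]
      apply mul_le_mul_of_nonneg_right _ (by positivity)
      exact le_trans (by norm_num) (pow_le_pow_right₀ (by norm_num) h4 : (1.2831:ℝ) ^ 4 ≤ 1.2831 ^ d)
    · set r := Real.sqrt ((1 - ε) ^ d) with hr
      have hr0 : 0 ≤ r := Real.sqrt_nonneg _
      have hr2 : r ^ 2 = (1 - ε) ^ d := Real.sq_sqrt hρ0
      have hg0 : 0 ≤ (1 - 1.2831 * ε) ^ d := pow_nonneg hβ0 _
      have hg1 : (1 - 1.2831 * ε) ^ d ≤ 1 := pow_le_one₀ hβ0 (by linarith)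
      have hg : r ^ 3 ≤ (1 - 1.2831 * ε) ^ d := by
        refine (pow_le_pow_iff_left₀ (by positivity) hg0 (by norm_num : 2 ≠ 0)).1 ?_
        have := pow_le_pow_left₀ (pow_nonneg (by linarith) _) (p4pow ε hε0.le (by norm_num at *; linarith)) d
        calc (r ^ 3) ^ 2 = (r ^ 2) ^ 3 := by ring
          _ = ((1 - ε) ^ 3) ^ d := by rw [hr2, ← pow_mul, ← pow_mul, mul_comm]
          _ ≤ ((1 - 1.2831 * ε) ^ 2) ^ d := this
          _ = _ := by rw [← pow_mul, ← pow_mul, mul_comm 2 d]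
      have hι : (1 - (1 - 1.2831 * ε) ^ d) ^ 2 ≤ (1 - r ^ 3) ^ 2 :=
        pow_le_pow_left₀ (by linarith) (by linarith) 2
      rcases le_total ((1 - ε) ^ d) 0.5 with h5 | h5
      · apply fin_A _ _ _ hf hn _ (by linarith)
        have := p4A r hr0 (by rw [hr2]; exact hρ.le) (by rw [hr2]; exact h5)
        rw [hr2] at this
        linarith
      · apply hB _ h5
        have := p4B r hr0 (by rw [hr2]; exact h5) (by rw [hr2]; exact hρ1)
        rw [hr2] at this
        linarith
  · obtain rfl : d = 3 := le_antisymm h4 hd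
    refine fin_box F ε (1.3942 * ε) ((1 - (1 - 1.3942 * ε) ^ 3) ^ 2) hε0 hε1 (by positivity)
      (by norm_num at *; linarith) ?_ (by positivity)
      (fun s hs hsβ => iso_general F s _ (by norm_num at *; linarith) hs hsβ) ?_
    · rw [mul_pow]
      exact mul_le_mul_of_nonneg_right (by norm_num) (by positivity)
    · rcases le_total ((1 - ε) ^ 3) 0.5 with h5 | h5
      · apply fin_A _ _ _ hf hn _ (by linarith)
        apply p3A ε _ hε488
        by_contra hc
        push Not at hc
        have := pow_le_pow_left₀ (by norm_num) (show (0.794:ℝ) ≤ 1 - ε by norm_num at *; linarith) 3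
        norm_num at *; linarith
      · apply hB _ h5
        apply p3B ε hε0.le
        by_contra hc
        push Not at hc
        have := pow_le_pow_left₀ (by linarith) (show 1 - ε ≤ 0.7936 by norm_num at *; linarith) 3
        norm_num at *; linarith

lemma quarter_log : Real.log 3 / 2 - 1 / 4 * Real.log (3 / 2) = Real.log 6 / 4 := by
  have e : Real.log 6 = Real.log 2 + Real.log 3 := by
    rw [← Real.log_mul (by norm_num) (by norm_num)]; norm_num
  rw [e, Real.log_div (by norm_num) (by norm_num)]; ring

lemma case_two (F : Fin 2 → ℕ) (ε : ℝ) (hε0 : 0 < ε) (hε1 : ε < 1)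
    (hT : 1 ≤ ε ^ 2 * normF F) : (NF F : ℝ) ≤ RH ε 2 (normF F) := by
  have hn := normF_pos F
  rcases le_total ε 0.28 with h28 | h28
  · rcases le_or_gt ((normF F : ℝ) * (0.06811 - 0.0788 * (1 - (1 - ε) ^ 2))) 1.0986 with hf | hf
    · exact fin_triv F ε 0 hε0 hε1 (by simpa using hT) (by simpa using hf)
    refine fin_box F ε (1.6463 * ε) (2 * (1.6463 * ε) ^ 2) hε0 hε1 (by positivity)
      (by norm_num at *; linarith) ?_ (by positivity)
      (fun s hs hsβ => iso_two F s _ (by norm_num at *; linarith) hsβ) ?_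
    · rw [mul_pow]
      exact mul_le_mul_of_nonneg_right (by norm_num) (by positivity)
    · rcases le_total ε 0.18 with h18 | h18
      · have : ε ^ 2 ≤ 0.03325 + 0.0788 * (1 - (1 - ε) ^ 2) - 0.10138 * (2 * (1.6463 * ε) ^ 2) := by
          nlinarith
        have := mul_le_mul_of_nonneg_left this hn.le
        linarith
      · apply fin_A _ _ _ hf hn
        · nlinarith
        · nlinarith
  · have hu : 0.4816 ≤ 1 - (1 - ε) ^ 2 := by nlinarith
    have hε2 : 0.0784 ≤ ε ^ 2 := by nlinarith
    rcases le_or_gt (normF F : ℝ) 36 with h36 | h36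
    · apply fin_triv F ε 0 hε0 hε1 (by simpa using hT)
      have := mul_le_mul_of_nonneg_left (show 0.06811 - 0.0788 * (1 - (1 - ε) ^ 2) ≤ 0.03017 by norm_num at *; linarith) hn.le
      linarith
    rcases le_or_gt (normF F : ℝ) 60 with h60 | h60
    · apply fin_triv F ε 1 hε0 hε1
      · have := mul_le_mul_of_nonneg_right hε2 hn.le
        have := Real.exp_one_lt_d9
        linarith
      have := mul_le_mul_of_nonneg_left (show 0.06811 - 0.0788 * (1 - (1 - ε) ^ 2) ≤ 0.03017 by norm_num at *; linarith) hn.le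
      linarith
    apply fin_second F ε hε0 hε1
    have key := NF_box F (1 / 2) (normF F / 4)
      (Real.exp (normF F * (Real.log 6 / 4) + (Real.log 3 / 2 - Real.log 6 / 4) * (normF F * (2 * (1 / 2) ^ 2))))
      (by norm_num) (by norm_num) (by positivity) (by linarith) (Real.exp_pos _).le
      (fun s hs hs0 hsβ => chain_iso F s _ ((iso_count F s hs hs0).trans (iso_two F s _ (by norm_num) hsβ)))
    refine key.trans ?_
    set n : ℝ := (normF F : ℝ) with hnn
    obtain ⟨a, b, c⟩ := nsix
    have x1 : Real.exp (n * (Real.log 3 / 2) - n / 4 * Real.log (3 / 2)) ≤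
        n / 1200 * Real.exp (n * 0.49864) := by
      have : n * (Real.log 3 / 2) - n / 4 * Real.log (3 / 2) = n * (Real.log 6 / 4) := by
        rw [← quarter_log]; ring
      rw [this]
      have e1 : (20:ℝ) ≤ Real.exp 3 := by
        have h1 := Real.exp_one_gt_d9
        have := pow_le_pow_left₀ (by norm_num) h1.le 3
        rw [← Real.exp_nat_mul] at this
        norm_num at this ⊢; linarith
      have e2 : Real.exp (n * (Real.log 6 / 4)) * Real.exp 3 ≤ Real.exp (n * 0.49864) := by
        rw [← Real.exp_add]; apply Real.exp_le_exp.2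
        have := mul_le_mul_of_nonneg_left a hn.le
        norm_num at *; linarith
      have e3 := Real.exp_pos (n * (Real.log 6 / 4))
      nlinarith [Real.exp_pos (n * 0.49864)]
    have x2 : Real.exp (n * (Real.log 6 / 4) + (Real.log 3 / 2 - Real.log 6 / 4) * (n * (2 * (1 / 2) ^ 2))) ≤
        Real.exp (n * 0.49864) := by
      apply Real.exp_le_exp.2
      have := mul_le_mul_of_nonneg_left a hn.le
      have := mul_le_mul_of_nonneg_left b hn.le
      norm_num at *; linarith
    have x3 : 3.3 * Real.exp (n * 0.49864) ≤ Real.exp (n * (0.4812 + 0.0788 * (1 - (1 - ε) ^ 2))) := by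
      have e1 : (3.3:ℝ) ≤ Real.exp 1.2 := by
        have h1 := Real.exp_one_gt_d9
        have h2 := Real.quadratic_le_exp_of_nonneg (show (0:ℝ) ≤ 0.2 by norm_num)
        rw [show (1.2:ℝ) = 1 + 0.2 by norm_num, Real.exp_add]
        norm_num at *
        nlinarith
      refine (mul_le_mul_of_nonneg_right e1 (Real.exp_pos _).le).trans ?_
      rw [← Real.exp_add]; apply Real.exp_le_exp.2
      have := mul_le_mul_of_nonneg_left hu hn.le
      norm_num at *; linarith
    have x4 := mul_le_mul_of_nonneg_left x2 (show 0 ≤ n / 4 by positivity)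
    have x5 : 0.0784 * n * (3.3 * Real.exp (n * 0.49864)) ≤
        ε ^ 2 * n * Real.exp (n * (0.4812 + 0.0788 * (1 - (1 - ε) ^ 2))) :=
      mul_le_mul (mul_le_mul_of_nonneg_right hε2 hn.le) x3 (by positivity) (by positivity)
    have x6 : 0 ≤ n * Real.exp (n * 0.49864) := by positivity
    norm_num at *
    linarith

lemma four_le_chain (F s x : Fin 1 → ℕ) (hx : x ≤ F) (hs0 : s ≠ 0) (h4 : 4 * s 0 ≤ F 0 + 1) :
    4 ≤ (chain F s x).card := by
  classical
  have hs : 0 < s 0 := by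
    rcases Nat.eq_zero_or_pos (s 0) with h | h
    · exact absurd (funext fun i => by rw [Subsingleton.elim i 0]; simpa using h) hs0
    · exact h
  have hx0 : x 0 ≤ F 0 := hx 0
  have hsub : (Finset.range 4).image (fun k => (fun _ : Fin 1 => x 0 % s 0 + k * s 0)) ⊆ chain F s x := by
    intro y hy
    obtain ⟨k, hk, rfl⟩ := Finset.mem_image.1 hy
    have hk4 : k ≤ 3 := by have := Finset.mem_range.1 hk; omega
    have hm := Nat.mod_lt (x 0) hs
    have hks := Nat.mul_le_mul_right (s 0) hk4
    have hdm := Nat.mod_add_div (x 0) (s 0)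
    refine mem_chain.2 ⟨?_, ?_⟩
    · intro i
      rw [Subsingleton.elim i 0]
      simp only
      omega
    · rcases le_total k (x 0 / s 0) with h | h
      · obtain ⟨j, hj⟩ := Nat.exists_eq_add_of_le h
        refine ⟨j, Or.inr ?_⟩
        funext i
        rw [Subsingleton.elim i 0]
        simp only [Pi.add_apply, Pi.smul_apply, smul_eq_mul]
        rw [hj] at hdm
        nlinarith
      · obtain ⟨j, hj⟩ := Nat.exists_eq_add_of_le h
        refine ⟨j, Or.inl ?_⟩
        funext i
        rw [Subsingleton.elim i 0]
        simp only [Pi.add_apply, Pi.smul_apply, smul_eq_mul]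
        rw [hj]
        nlinarith
  refine le_trans ?_ (Finset.card_le_card hsub)
  rw [Finset.card_image_of_injective]
  · simp
  · intro a b hab
    have := congrFun hab 0
    simp only [add_right_inj] at this
    exact Nat.eq_of_mul_eq_mul_right hs this

lemma case_one (F : Fin 1 → ℕ) (ε : ℝ) (hε0 : 0 < ε) (hε1 : ε < 1)
    (hT : 1 ≤ ε ^ 1 * normF F) : (NF F : ℝ) ≤ RH ε 1 (normF F) := by
  have hn := normF_pos F
  have hu : 0 ≤ 1 - (1 - ε) ^ 1 := by rw [pow_one]; linarith
  rcases Nat.lt_or_ge (normF F) 17 with h17 | h17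
  · apply fin_triv F ε 0 hε0 hε1 (by simpa using hT)
    have h16 : (normF F : ℝ) ≤ 16 := by exact_mod_cast (by omega : normF F ≤ 16)
    have := mul_le_mul_of_nonneg_left (show 0.06811 - 0.0788 * (1 - (1 - ε) ^ 1) ≤ 0.06811 by linarith) hn.le
    linarith
  have h17' : (17 : ℝ) ≤ normF F := by exact_mod_cast h17
  apply fin_second F ε hε0 hε1
  have hg4 : ((15:ℝ) ^ ((1:ℝ) / 4)) ^ 4 = 15 := by
    rw [← Real.rpow_natCast, ← Real.rpow_mul (by norm_num)]; norm_num
  have hg0 : 0 ≤ (15:ℝ) ^ ((1:ℝ) / 4) := by positivity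
  have hg : 1.4 ≤ (15:ℝ) ^ ((1:ℝ) / 4) := by
    refine (pow_le_pow_iff_left₀ (by norm_num) hg0 (by norm_num : 4 ≠ 0)).1 ?_
    rw [hg4]; norm_num
  have hM : ∀ s : Fin 1 → ℕ, s ≤ F → s ≠ 0 → (∀ i, (s i : ℝ) < 1 / 4 * (F i + 1)) →
      (((Fam F).filter (fun A => s ∈ A)).card : ℝ) ≤ Real.exp (normF F * 0.33853) := by
    intro s hs hs0 hsβ
    refine (chain_exp F s ((15:ℝ) ^ ((1:ℝ) / 4)) 4 (by norm_num) (by norm_num at *; linarith)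
      (by rw [hg4]; norm_num) (by norm_num at *; linarith)).trans ?_
    rw [← Real.exp_sum]
    apply Real.exp_le_exp.2
    have h4 : 4 * s 0 ≤ F 0 + 1 := by
      have := hsβ 0
      have : (4 * s 0 : ℝ) ≤ F 0 + 1 := by linarith
      exact_mod_cast this
    rw [← normF_eq, ← nsmul_eq_mul]
    apply Finset.sum_le_card_nsmul
    intro x hx
    have := four_le_chain F s x (Finset.mem_Iic.1 hx) hs0 h4
    rw [if_neg (by omega), Real.log_rpow (by norm_num)]
    have := n15
    linarith
  have key := NF_box F (1 / 4) (normF F / 4) (Real.exp (normF F * 0.33853))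
    (by norm_num) (by norm_num) (by positivity) (by linarith) (Real.exp_pos _).le hM
  refine key.trans ?_
  set n : ℝ := (normF F : ℝ) with hnn
  obtain ⟨a, b, c⟩ := nsix
  have this : n * (Real.log 3 / 2) - n / 4 * Real.log (3 / 2) = n * (Real.log 6 / 4) := by
    rw [← quarter_log]; ring
  rw [this]
  have y1 : Real.exp (n * (Real.log 6 / 4)) ≤ 0.59 * Real.exp (n * 0.4812) := by
    have e1 : (1.7:ℝ) ≤ Real.exp 0.56525 := by
      have h2 := Real.quadratic_le_exp_of_nonneg (show (0:ℝ) ≤ 0.56525 by norm_num)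
      norm_num at *; linarith
    have e2 : Real.exp (n * (Real.log 6 / 4)) * Real.exp 0.56525 ≤ Real.exp (n * 0.4812) := by
      rw [← Real.exp_add]; apply Real.exp_le_exp.2
      have := mul_le_mul_of_nonneg_left a hn.le
      norm_num at *; linarith
    have e3 := Real.exp_pos (n * (Real.log 6 / 4))
    have e4 := mul_le_mul_of_nonneg_left e1 e3.le
    norm_num at *; linarith
  have y2 : n / 4 * Real.exp (n * 0.33853) ≤ 0.4 * Real.exp (n * 0.4812) := by
    have e0 : (10.7:ℝ) ≤ Real.exp 2.42539 := by
      have h1 := Real.exp_one_gt_d9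
      have h2 := Real.quadratic_le_exp_of_nonneg (show (0:ℝ) ≤ 0.42539 by norm_num)
      rw [show (2.42539:ℝ) = 1 + 1 + 0.42539 by norm_num, Real.exp_add, Real.exp_add]
      have h3 := mul_le_mul h1.le h1.le (by norm_num) (Real.exp_pos _).le
      have h4 := mul_le_mul h3 h2 (by norm_num) (by positivity)
      norm_num at *; linarith
    have e1 : n ≤ 1.6 * Real.exp (n * 0.14267) := by
      have h2 := Real.add_one_le_exp ((n - 17) * 0.14267)
      rw [show n * 0.14267 = 2.42539 + (n - 17) * 0.14267 by ring, Real.exp_add]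
      have := mul_le_mul e0 h2 (by linarith) (by positivity)
      linarith
    have e2 : Real.exp (n * 0.4812) = Real.exp (n * 0.14267) * Real.exp (n * 0.33853) := by
      rw [← Real.exp_add]; congr 1; ring
    rw [e2]
    have := mul_le_mul_of_nonneg_right e1 (Real.exp_pos (n * 0.33853)).le
    linarith
  have y3 : Real.exp (n * 0.4812) ≤ Real.exp (n * (0.4812 + 0.0788 * (1 - (1 - ε) ^ 1))) := by
    apply Real.exp_le_exp.2
    apply mul_le_mul_of_nonneg_left _ hn.le
    linarith
  have y4 := mul_le_mul hT y3 (Real.exp_pos _).le (by positivity)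
  have y5 := Real.exp_pos (n * 0.4812)
  linarith

end fin

/-- For `0 < ε < 1`, with `φ = (1+√5)/2`,
`N(F) ≤ (√3)^{(1-2εᵈ)‖F‖} + εᵈ ‖F‖ φ^{‖F‖} (φ/5^{1/4})^{(1-(1-ε)ᵈ)‖F‖}`. -/
theorem upper_bound_epsilon (ε : ℝ) (hε0 : 0 < ε) (hε1 : ε < 1) (d : ℕ) (hd : 1 ≤ d)
    (F : Fin d → ℕ) :
    (NF F : ℝ) ≤
      Real.sqrt 3 ^ ((1 - 2 * ε ^ d) * (normF F : ℝ)) +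
        ε ^ d * (normF F : ℝ) * ((1 + Real.sqrt 5) / 2) ^ (normF F) *
          (((1 + Real.sqrt 5) / 2) / (5 : ℝ) ^ ((1 : ℝ) / 4)) ^
            ((1 - (1 - ε) ^ d) * (normF F : ℝ)) := by
  rw [rhs_eq]
  change (NF F : ℝ) ≤ RH ε d (normF F)
  rcases le_total (ε ^ d * normF F) 1 with hT | hT
  · exact fin_small F ε hε0 hT
  rcases Nat.lt_or_ge d 3 with h3 | h3
  · obtain rfl | rfl : d = 1 ∨ d = 2 := by omega
    · exact case_one F ε hε0 hε1 hT
    · exact case_two F ε hε0 hε1 hT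
  · rcases le_or_gt ((normF F : ℝ) * (0.06811 - 0.0788 * (1 - (1 - ε) ^ d))) 1.0986 with hf | hf
    · exact fin_triv F ε 0 hε0 hε1 (by simpa using hT) (by simpa using hf)
    · exact case_ge3 F h3 ε hε0 hε1 hT hf
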